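/- Let F : ℝ^d → ℝ be convex, twice continuously differentiable with L-Lipschitz Hessian, attaining its minimum at x*, and let f₁ : ℝ^d → ℝ be twice continuously differentiable with ‖∇²f₁(x) − ∇²F(x)‖_op ≤ β for all x (β > 0, L > 0). For M > 0 define the model F̃_M(x, z) := F(z) + ⟨∇F(z), x − z⟩ + (1/2)⟨(∇²f₁(z) + 3β·I)(x − z), x − z⟩ + (M/6)‖x − z‖³. Let x₀ ∈ ℝ^d and define sequences (x_t), (y_t), (w_t) and functions ψ_t as follows: x₁ is a global minimizer of x ↦ F̃_{4L}(x, x₀); ψ₁(x) := F(x₁) + 8β‖x − x₀‖² + 16L‖x − x₀‖³ and y₁ is a global minimizer of ψ₁; A₀ = 1 and for t ≥ 1, A_t = A_{t−1}(1 − 3/(t+3)); for t ≥ 1, w_t = (1 − 3/(t+3))x_t + (3/(t+3))y_t, x_{t+1} is a global minimizer of x ↦ F̃_{4L}(x, w_t), ψ_{t+1}(x) := ψ_t(x) + 4β‖x − x₀‖² + (3/(A_t(t+3)))(F(x_{t+1}) + ⟨∇F(x_{t+1}), x − x_{t+1}⟩), and y_{t+1} is a global minimizer of ψ_{t+1}.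 Then for every t ≥ 1, F(x_t) − F(x*) ≤ 98L‖x₀ − x*‖³ / t³ + 48β‖x₀ − x*‖² / t². -/

import Mathlib

open scoped RealInnerProductSpace

/-- The cubic-regularized second-order model
`F̃_M(x, z) = F(z) + ⟨∇F(z), x−z⟩ + ½⟨(∇²f₁(z) + 3β·I)(x−z), x−z⟩ + (M/6)‖x−z‖³`,
where the Hessian `∇²f₁(z)` is realized as `fderiv ℝ (gradient f₁) z`. -/
noncomputable def cubicModel {d : ℕ} (F f₁ : EuclideanSpace ℝ (Fin d) → ℝ)
    (β M : ℝ) (x z : EuclideanSpace ℝ (Fin d)) : ℝ :=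
  F z + ⟪gradient F z, x - z⟫
    + (1 / 2) * ⟪fderiv ℝ (gradient f₁) z (x - z) + (3 * β) • (x - z), x - z⟫
    + (M / 6) * ‖x - z‖ ^ 3

section helpers
variable {E : Type*} [NormedAddCommGroup E] [InnerProductSpace ℝ E]

lemma aux_cube (a b R : ℝ) (ha : 0 ≤ a) (hb : 0 ≤ b) (hR : 0 ≤ R) (h1 : R ≤ a + b)
    (h2 : b ≤ R + a) (h3 : a ≤ R + b) :
    (4/5) * (a^2*b/2 + a*(R^2-a^2-b^2)) + b^3/6 ≤ R^3/3 := by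
  obtain ⟨p, hp⟩ : ∃ p, p = a + b - R := ⟨_, rfl⟩
  obtain ⟨q, hq⟩ : ∃ q, q = R + a - b := ⟨_, rfl⟩
  obtain ⟨r, hr⟩ : ∃ r, r = R + b - a := ⟨_, rfl⟩
  have hp0 : 0 ≤ p := by linarith
  have hq0 : 0 ≤ q := by linarith
  have hr0 : 0 ≤ r := by linarith
  have ea : a = (p+q)/2 := by linarith
  have eb : b = (p+r)/2 := by linarith
  have eR : R = (q+r)/2 := by linarith
  subst ea eb eR
  have := mul_nonneg hp0 hq0
  have := mul_nonneg hp0 hr0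
  have := mul_nonneg hq0 hr0
  nlinarith [mul_nonneg hq0 (sq_nonneg (2*q-3*r)), mul_nonneg hp0 (sq_nonneg (q-r)),
    mul_nonneg hp0 (sq_nonneg (p-r)), mul_nonneg hp0 (sq_nonneg (p-q)), mul_nonneg hr0 (sq_nonneg (q-r)),
    mul_nonneg hr0 (sq_nonneg (p-q)), mul_nonneg hr0 (sq_nonneg (p-r)),
    mul_nonneg hq0 (sq_nonneg (p-r)), mul_nonneg hq0 (sq_nonneg (p-q)),
    pow_nonneg hp0 3, pow_nonneg hq0 3, pow_nonneg hr0 3, mul_nonneg this hp0]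

lemma aux_mid3 (p q : E) : 2 * (‖p‖^3 + ‖q‖^3) ≤ ‖p+q‖^3 + ‖p-q‖^3 := by
  have hpar := parallelogram_law_with_norm ℝ p q
  obtain ⟨S, hS⟩ : ∃ S, S = Real.sqrt (‖p‖^2+‖q‖^2) := ⟨_, rfl⟩
  have hS0 : 0 ≤ S := hS ▸ Real.sqrt_nonneg _
  have hS2 : S^2 = ‖p‖^2+‖q‖^2 := by rw [hS, Real.sq_sqrt (by positivity)]
  have hP := norm_nonneg p
  have hQ := norm_nonneg q
  have hX := norm_nonneg (p+q)
  have hY := norm_nonneg (p-q)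
  generalize ‖p‖ = P at *
  generalize ‖q‖ = Q at *
  generalize ‖p+q‖ = X at *
  generalize ‖p-q‖ = Y at *
  have h1 : P ≤ S := by nlinarith
  have h2 : Q ≤ S := by nlinarith
  have e1 : 0 ≤ (X-S)^2*(X+S/2) := by positivity
  have e2 : 0 ≤ (Y-S)^2*(Y+S/2) := by positivity
  have e3 : X^3 + Y^3 ≥ 2*S^3 := by
    have : S * (X^2+Y^2) = S * (2*S^2) := by rw [hpar, hS2]
    nlinarith
  have e4 : P^2*P ≤ P^2*S := by gcongr
  have e5 : Q^2*Q ≤ Q^2*S := by gcongr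
  have : S^3 = P^2*S+Q^2*S := by rw [← add_mul, ← hS2]; ring
  nlinarith

lemma aux_mid (c u v : E) : 
    ‖(1/2:ℝ)•(u+v) - c‖^3 + ‖u-v‖^3/8 ≤ (‖u-c‖^3+‖v-c‖^3)/2 ∧
    ‖(1/2:ℝ)•(u+v) - c‖^2 + ‖u-v‖^2/4 ≤ (‖u-c‖^2+‖v-c‖^2)/2 := by
  have h1 : (1/2:ℝ)•(u+v) - c + (1/2:ℝ)•(u-v) = u - c := by module
  have h2 : (1/2:ℝ)•(u+v) - c - (1/2:ℝ)•(u-v) = v - c := by module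
  have h3 : ‖(1/2:ℝ)•(u-v)‖ = ‖u-v‖/2 := by rw [norm_smul]; norm_num; ring
  have a := aux_mid3 ((1/2:ℝ)•(u+v) - c) ((1/2:ℝ)•(u-v))
  have b := parallelogram_law_with_norm ℝ ((1/2:ℝ)•(u+v) - c) ((1/2:ℝ)•(u-v))
  rw [h1, h2, h3] at a b
  constructor <;> nlinarith

/-- key step inequality -/
lemma aux_step (g δ : E) (β L ρ : ℝ) (hβ : 0 < β) (hL : 0 < L) (hρ : 0 ≤ ρ)
    (h : ‖g - (3*β+2*L*‖δ‖)•δ‖ ≤ L/2*‖δ‖^2+β*‖δ‖) :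
    0 ≤ ⟪g, δ⟫ - ‖g‖*ρ + 4/3*β*ρ^2 + 8/9*L*ρ^3 := by
  have hG := norm_nonneg g
  have ha := norm_nonneg δ
  obtain ⟨κ, hκ⟩ : ∃ κ, κ = 3*β+2*L*‖δ‖ := ⟨_, rfl⟩
  have hκ0 : 0 < κ := by rw [hκ]; positivity
  rw [← hκ] at h
  have hη : L/2*‖δ‖^2+β*‖δ‖ ≤ κ/3*‖δ‖ := by
    rw [hκ]; nlinarith [mul_nonneg hL.le (mul_nonneg ha ha)]
  have hsq : ‖g - κ•δ‖^2 = ‖g‖^2 - 2*κ*⟪g,δ⟫ + κ^2*‖δ‖^2 := by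
    rw [norm_sub_sq_real, inner_smul_right, norm_smul, Real.norm_of_nonneg hκ0.le]; ring
  have h1 : ‖g - κ•δ‖^2 ≤ (κ/3*‖δ‖)^2 := by gcongr; linarith
  have hGle : ‖g‖ ≤ 4*β*‖δ‖+5/2*L*‖δ‖^2 := by
    have : ‖g‖ ≤ ‖g - κ•δ‖ + ‖κ•δ‖ := by
      calc ‖g‖ = ‖(g-κ•δ)+κ•δ‖ := by congr 1; abel
        _ ≤ _ := norm_add_le _ _
    rw [norm_smul, Real.norm_of_nonneg hκ0.le] at this
    rw [hκ] at this h
    nlinarith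
  have hin : 9/10*(‖g‖*‖δ‖) ≤ ⟪g,δ⟫ := by
    have : κ * (9/10*(‖g‖*‖δ‖)) ≤ κ*⟪g,δ⟫ := by
      nlinarith [sq_nonneg (‖g‖-9/10*κ*‖δ‖), sq_nonneg (κ*‖δ‖)]
    exact le_of_mul_le_mul_left this hκ0
  clear h h1 hsq hη
  generalize ‖g‖ = G at *
  generalize ‖δ‖ = a at *
  by_cases hc : ρ ≤ 9/10*a
  · have : 0 ≤ G*(9/10*a-ρ) := mul_nonneg hG (by linarith)
    have : 0 ≤ 4/3*β*ρ^2 + 8/9*L*ρ^3 := by positivity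
    linarith
  · have hc' : 0 ≤ ρ - 9/10*a := by linarith
    have k1 := mul_le_mul_of_nonneg_right hGle hc'
    have k2 : 0 ≤ 4/3*ρ^2 - 4*a*(ρ-9/10*a) := by nlinarith [sq_nonneg (ρ-3/2*a), sq_nonneg a]
    have k3 : 0 ≤ 8/9*ρ^3 - 5/2*a^2*(ρ-9/10*a) := by
      have : 0 ≤ (ρ-a)^2*(ρ+2*a) := by positivity
      nlinarith [pow_nonneg ha 3, mul_nonneg (sq_nonneg a) hρ, pow_nonneg hρ 3, mul_nonneg ha (sq_nonneg ρ)]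
    have := mul_nonneg hβ.le k2
    have := mul_nonneg hL.le k3
    nlinarith

variable [CompleteSpace E]

lemma aux_grad_hasDeriv (F : E → ℝ) (hF : ContDiff ℝ 2 F) (u h : E) (s : ℝ) :
    HasDerivAt (fun s : ℝ => F (u + s • h)) ⟪gradient F (u + s • h), h⟫ s := by
  have hd : DifferentiableAt ℝ F (u + s•h) := (hF.differentiable (by norm_num)) _
  have h1 := hd.hasGradientAt.hasFDerivAt
  have h2 : HasDerivAt (fun s : ℝ => u + s • h) h s := by
    simpa using ((hasDerivAt_id s).smul_const h).const_add u
  have := h1.comp_hasDerivAt s h2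
  exact this

lemma aux_grad_diff (F : E → ℝ) (hF : ContDiff ℝ 2 F) : Differentiable ℝ (gradient F) := by
  have : ContDiff ℝ 1 (fderiv ℝ F) := hF.fderiv_right (by norm_num)
  have h := (this.differentiable (by norm_num))
  unfold gradient
  exact fun x => ((InnerProductSpace.toDual ℝ E).symm.toContinuousLinearEquiv.differentiableAt).comp x (h x)

lemma aux_symm (F : E → ℝ) (hF : ContDiff ℝ 2 F) (z u v : E) :
    ⟪fderiv ℝ (gradient F) z u, v⟫ = ⟪fderiv ℝ (gradient F) z v, u⟫ := by
  have h1 : ContDiff ℝ 1 (fderiv ℝ F) := hF.fderiv_right (by norm_num)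
  have h := (h1.differentiable (by norm_num)) z
  have hsymm : IsSymmSndFDerivAt ℝ F z := hF.contDiffAt.isSymmSndFDerivAt (by simp)
  have key : ∀ a b : E, ⟪fderiv ℝ (gradient F) z a, b⟫ = fderiv ℝ (fderiv ℝ F) z a b := by
    intro a b
    have h1 := (aux_grad_diff F hF z).hasFDerivAt.inner ℝ (hasFDerivAt_const b z)
    have h2 := h.hasFDerivAt.clm_apply (hasFDerivAt_const b z)
    have e : (fun u => ⟪gradient F u, b⟫) = fun u => fderiv ℝ F u b := by
      funext u; simp
    rw [e] at h1
    have := congrArg (fun T => T a) (h1.unique h2)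
    simpa [fderivInnerCLM_apply] using this
  rw [key, key]
  exact hsymm u v

lemma aux_convex (F : E → ℝ) (hF : ContDiff ℝ 2 F) (hc : ConvexOn ℝ Set.univ F) (u v : E) :
    F u + ⟪gradient F u, v - u⟫ ≤ F v := by
  have hd := aux_grad_hasDeriv F hF u (v-u) 0
  have hc1 : ConvexOn ℝ Set.univ (fun s : ℝ => F (u + s•(v-u))) := by
    have := hc.comp_affineMap (AffineMap.lineMap u v : ℝ →ᵃ[ℝ] E)
    have e : (F ∘ (AffineMap.lineMap u v : ℝ →ᵃ[ℝ] E)) = (fun s : ℝ => F (u + s•(v-u))) := by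
      funext s
      simp [AffineMap.lineMap_apply, add_comm]
    rw [e] at this
    exact this
  have := hc1.le_slope_of_hasDerivAt (Set.mem_univ 0) (Set.mem_univ 1) one_pos hd
  simp only [slope_def_field, zero_smul, add_zero, one_smul, add_sub_cancel, sub_zero, div_one] at this
  linarith

lemma aux_taylor1 (F : E → ℝ) (hF : ContDiff ℝ 2 F) (L : ℝ)
    (hlip : ∀ x y, ‖fderiv ℝ (gradient F) x - fderiv ℝ (gradient F) y‖ ≤ L * ‖x - y‖) (u h : E) :
    ‖gradient F (u+h) - gradient F u - fderiv ℝ (gradient F) u h‖ ≤ L/2*‖h‖^2 := by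
  have hd : ∀ s : ℝ, HasDerivAt (fun s : ℝ => gradient F (u + s•h) - gradient F u - s • fderiv ℝ (gradient F) u h)
      (fderiv ℝ (gradient F) (u+s•h) h - fderiv ℝ (gradient F) u h) s := by
    intro s
    have h2 : HasDerivAt (fun s : ℝ => u + s • h) h s := by
      simpa using ((hasDerivAt_id s).smul_const h).const_add u
    have h1 := ((aux_grad_diff F hF) (u+s•h)).hasFDerivAt.comp_hasDerivAt s h2
    have h3 := (hasDerivAt_id s).smul_const (fderiv ℝ (gradient F) u h)
    rw [one_smul] at h3
    exact (h1.sub_const _).sub h3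
  have hB : ∀ s : ℝ, HasDerivAt (fun s : ℝ => L/2*‖h‖^2*s^2) (L*‖h‖^2*s) s := by
    intro s
    have := (hasDerivAt_pow 2 s).const_mul (L/2*‖h‖^2)
    exact this.congr_deriv (by simp; try ring)
  have := image_norm_le_of_norm_deriv_right_le_deriv_boundary (a := 0) (b := 1)
    (f := fun s : ℝ => gradient F (u + s•h) - gradient F u - s • fderiv ℝ (gradient F) u h)
    (fun s _ => (hd s).continuousAt.continuousWithinAt) (fun s _ => (hd s).hasDerivWithinAt)
    (B := fun s : ℝ => L/2*‖h‖^2*s^2) (by simp) hB ?_ (x := 1) (by simp)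
  · simpa using this
  · intro s hs
    rw [← sub_apply]
    refine (ContinuousLinearMap.le_opNorm _ _).trans ?_
    have h4 := hlip (u+s•h) u
    rw [add_sub_cancel_left, norm_smul, Real.norm_of_nonneg hs.1] at h4
    calc _ ≤ L * (s*‖h‖) * ‖h‖ := by gcongr
      _ = _ := by ring

lemma aux_taylor2 (F : E → ℝ) (hF : ContDiff ℝ 2 F) (L : ℝ)
    (hlip : ∀ x y, ‖fderiv ℝ (gradient F) x - fderiv ℝ (gradient F) y‖ ≤ L * ‖x - y‖) (u h : E)
    (hg : gradient F u = 0) :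
    F (u+h) - F u ≤ 1/2*⟪gradient F (u+h), h⟫ + 5/12*L*‖h‖^3 := by
  obtain ⟨Q, hQ⟩ : ∃ Q, Q = ⟪fderiv ℝ (gradient F) u h, h⟫ := ⟨_, rfl⟩
  have hT : ∀ s : ℝ, 0 ≤ s → |⟪gradient F (u+s•h), h⟫ - s*Q| ≤ L/2*s^2*‖h‖^3 := by
    intro s hs
    have := aux_taylor1 F hF L hlip u (s•h)
    rw [hg, sub_zero, map_smul, norm_smul, Real.norm_of_nonneg hs] at this
    have h2 := abs_real_inner_le_norm (gradient F (u+s•h) - s • fderiv ℝ (gradient F) u h) h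
    rw [inner_sub_left, inner_smul_left, ← hQ] at h2
    simp only [conj_trivial] at h2
    refine h2.trans ?_
    calc _ ≤ L/2*(s*‖h‖)^2*‖h‖ := by gcongr
      _ = _ := by ring
  have hB : ∀ s : ℝ, HasDerivAt (fun s : ℝ => F u + Q/2*s^2 + L/6*‖h‖^3*s^3) (Q*s + L/2*s^2*‖h‖^3) s := by
    intro s
    have := (((hasDerivAt_pow 2 s).const_mul (Q/2)).const_add (F u)).add ((hasDerivAt_pow 3 s).const_mul (L/6*‖h‖^3))
    exact this.congr_deriv (by simp; try ring)
  have := image_le_of_deriv_right_le_deriv_boundary (a := 0) (b := 1)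
    (f := fun s : ℝ => F (u+s•h)) (fun s _ => (aux_grad_hasDeriv F hF u h s).continuousAt.continuousWithinAt)
    (fun s _ => (aux_grad_hasDeriv F hF u h s).hasDerivWithinAt)
    (B := fun s : ℝ => F u + Q/2*s^2 + L/6*‖h‖^3*s^3) (by simp)
    (fun s _ => (hB s).continuousAt.continuousWithinAt) (fun s _ => (hB s).hasDerivWithinAt)
    ?_ (x := 1) (by simp)
  · have h1 := (abs_le.1 (hT 1 zero_le_one)).1
    simp only [one_smul, one_pow, mul_one, one_mul] at this h1
    linarith
  · intro s hs
    have := (abs_le.1 (hT s hs.1)).2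
    linarith

lemma aux_gradmin (F : E → ℝ) (u : E) (h : ∀ v, F u ≤ F v) : gradient F u = 0 := by
  have : IsLocalMin F u := Filter.Eventually.of_forall h
  simp [gradient, this.fderiv_eq_zero]

lemma aux_quad_min (g z x : E) (T : E →L[ℝ] E) (hT : ∀ u v, ⟪T u, v⟫ = ⟪T v, u⟫) (c M : ℝ)
    (hmin : ∀ u, c + ⟪g, x - z⟫ + 1/2*⟪T (x-z), x-z⟫ + M/6*‖x-z‖^3
      ≤ c + ⟪g, u - z⟫ + 1/2*⟪T (u-z), u-z⟫ + M/6*‖u-z‖^3) :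
    g + T (x-z) + (M/2*‖x-z‖)•(x-z) = 0 := by
  obtain ⟨h, hh⟩ : ∃ h, h = x - z := ⟨_, rfl⟩
  rw [← hh]
  rw [← hh] at hmin
  set v := g + T h + (M/2*‖h‖)•h with hv
  have hline : ∀ s : ℝ, HasDerivAt (fun s : ℝ => h + s • v) v s := by
    intro s
    simpa using ((hasDerivAt_id s).smul_const v).const_add h
  have hn : HasDerivAt (fun s : ℝ => ‖h+s•v‖^3) (3*‖h‖*⟪h,v⟫) 0 := by
    have h0 := hasFDerivAt_norm_rpow (h+(0:ℝ)•v) (p := 3) (by norm_num)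
    have h1 := h0.comp_hasDerivAt (0:ℝ) (hline 0)
    have e : ((3:ℝ)-2) = 1 := by norm_num
    simp [e] at h1
    exact h1
  have hi : HasDerivAt (fun s : ℝ => ⟪g, h+s•v⟫) ⟪g,v⟫ 0 := by
    have := (hasDerivAt_const (0:ℝ) g).inner ℝ (hline 0)
    simpa using this
  have hq : HasDerivAt (fun s : ℝ => ⟪T (h+s•v), h+s•v⟫) (2*⟪T h,v⟫) 0 := by
    have h1 := T.hasFDerivAt.comp_hasDerivAt (0:ℝ) (hline 0)
    have := h1.inner ℝ (hline 0)
    exact this.congr_deriv (by simp [hT v h]; try ring)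
  have hall := ((hi.const_add c).add (hq.const_mul (1/2))).add (hn.const_mul (M/6))
  have hloc : IsLocalMin (fun s : ℝ => c + ⟪g, h+s•v⟫ + 1/2*⟪T (h+s•v), h+s•v⟫ + M/6*‖h+s•v‖^3) 0 := by
    refine Filter.Eventually.of_forall fun s => ?_
    have := hmin (h+s•v+z)
    simpa using this
  have h0 := hloc.hasDerivAt_eq_zero hall
  have : ⟪v, v⟫ = 0 := by
    conv_lhs => rw [hv]
    simp only [← hv]
    rw [inner_add_left, inner_add_left, inner_smul_left]
    simp only [conj_trivial]
    linarith
  exact inner_self_eq_zero.1 this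

end helpers

section main
variable {d : ℕ}

lemma aux_model (F f₁ : EuclideanSpace ℝ (Fin d) → ℝ) (L β : ℝ) 
    (hFsmooth : ContDiff ℝ 2 F) (hf₁smooth : ContDiff ℝ 2 f₁)
    (hlip : ∀ x y : EuclideanSpace ℝ (Fin d), ‖fderiv ℝ (gradient F) x - fderiv ℝ (gradient F) y‖ ≤ L * ‖x - y‖)
    (hsim : ∀ x : EuclideanSpace ℝ (Fin d), ‖fderiv ℝ (gradient f₁) x - fderiv ℝ (gradient F) x‖ ≤ β)
    (x z : EuclideanSpace ℝ (Fin d)) (hx : ∀ u, cubicModel F f₁ β (4 * L) x z ≤ cubicModel F f₁ β (4 * L) u z) :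
    ‖gradient F x - (3*β+2*L*‖z-x‖)•(z-x)‖ ≤ L/2*‖z-x‖^2+β*‖z-x‖ := by
  have h := aux_quad_min (gradient F z) z x
    (fderiv ℝ (gradient f₁) z + (3*β)•ContinuousLinearMap.id ℝ _) (fun u v => by
      simp only [add_apply, smul_apply, ContinuousLinearMap.id_apply,
        inner_add_left, inner_smul_left]
      rw [aux_symm f₁ hf₁smooth, real_inner_comm u v]) (F z) (4*L) (fun u => by
      simpa [cubicModel] using hx u)
  simp only [add_apply, smul_apply, ContinuousLinearMap.id_apply] at h
  have ht := aux_taylor1 F hFsmooth L hlip z (x-z)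
  rw [add_sub_cancel] at ht
  have hs := (ContinuousLinearMap.le_opNorm (fderiv ℝ (gradient f₁) z - fderiv ℝ (gradient F) z) (x-z)).trans
    (mul_le_mul_of_nonneg_right (hsim z) (norm_nonneg _))
  rw [sub_apply] at hs
  rw [norm_sub_rev z x]
  have e : gradient F x - (3*β+2*L*‖x-z‖)•(z-x) =
    (gradient F x - gradient F z - fderiv ℝ (gradient F) z (x-z))
     - (fderiv ℝ (gradient f₁) z (x-z) - fderiv ℝ (gradient F) z (x-z)) := by
    have h' : fderiv ℝ (gradient f₁) z (x-z) = - gradient F z - (3*β)•(x-z) - (4*L/2*‖x-z‖)•(x-z) := by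
      rw [← sub_eq_zero, ← h]; abel
    rw [h']
    module
  rw [e]
  exact (norm_sub_le _ _).trans (by linarith)

lemma aux_first (F : EuclideanSpace ℝ (Fin d) → ℝ) (L β : ℝ) (hL : 0 < L) (hβ : 0 < β)
    (hFconv : ConvexOn ℝ Set.univ F)
    (hFsmooth : ContDiff ℝ 2 F)
    (hlip : ∀ x y : EuclideanSpace ℝ (Fin d), ‖fderiv ℝ (gradient F) x - fderiv ℝ (gradient F) y‖ ≤ L * ‖x - y‖)
    (x z s : EuclideanSpace ℝ (Fin d)) (hmin : ∀ u, F s ≤ F u)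
    (h : ‖gradient F x - (3*β+2*L*‖z-x‖)•(z-x)‖ ≤ L/2*‖z-x‖^2+β*‖z-x‖) :
    F x - F s ≤ 2*β*‖z-s‖^2 + L/3*‖z-s‖^3 := by
  have h2 := aux_taylor2 F hFsmooth L hlip s (x-s) (aux_gradmin F s hmin)
  rw [add_sub_cancel] at h2
  have h1 := aux_convex F hFsmooth hFconv x s
  rw [← neg_sub x s, inner_neg_right] at h1
  have h3 := (real_inner_le_norm (gradient F x - (3*β+2*L*‖z-x‖)•(z-x)) (x-s)).trans
    (mul_le_mul_of_nonneg_right h (norm_nonneg _))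
  rw [inner_sub_left, inner_smul_left] at h3
  simp only [conj_trivial] at h3
  have h4 : ‖z-s‖^2 = ‖z-x‖^2 + 2*⟪z-x,x-s⟫ + ‖x-s‖^2 := by
    rw [← norm_add_sq_real, sub_add_sub_cancel]
  have t1 : ‖z-s‖ ≤ ‖z-x‖+‖x-s‖ := norm_sub_le_norm_sub_add_norm_sub _ _ _
  have t2 : ‖x-s‖ ≤ ‖z-s‖+‖z-x‖ := by
    have := norm_sub_le_norm_sub_add_norm_sub x z s; rw [norm_sub_rev x z] at this; linarith
  have t3 : ‖z-x‖ ≤ ‖z-s‖+‖x-s‖ := by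
    have := norm_sub_le_norm_sub_add_norm_sub z s x; rw [norm_sub_rev s x] at this; linarith
  have hc := aux_cube _ _ _ (norm_nonneg (z-x)) (norm_nonneg (x-s)) (norm_nonneg (z-s)) t1 t2 t3
  obtain ⟨I, hI⟩ : ∃ I, I = ⟪z-x,x-s⟫ := ⟨_, rfl⟩
  rw [← hI] at h3 h4
  have hI' : I = (‖z-s‖^2-‖z-x‖^2-‖x-s‖^2)/2 := by linarith
  rw [hI'] at h3
  generalize ‖z-x‖ = a at *
  generalize ‖x-s‖ = b at *
  generalize ‖z-s‖ = R at *
  have hc' := mul_le_mul_of_nonneg_left hc hL.le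
  have : 0 ≤ β*(a-b)^2 := by positivity
  have : 0 ≤ β*a^2 := by positivity
  have : 0 ≤ β*b^2 := by positivity
  have : 0 ≤ β*R^2 := by positivity
  nlinarith

end main

set_option maxHeartbeats 1000000 in
/-- Convergence of the (distributed) accelerated cubic-regularized Newton
method with an inexact (`β`-similar) Hessian: for every `t ≥ 1`,
`F(x_t) − F(x*) ≤ 98L‖x₀ − x*‖³/t³ + 48β‖x₀ − x*‖²/t²`. -/
theorem stmt_0 {d : ℕ} (F f₁ : EuclideanSpace ℝ (Fin d) → ℝ) (L β : ℝ)
    (hL : 0 < L) (hβ : 0 < β)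
    (hFconv : ConvexOn ℝ Set.univ F)
    (hFsmooth : ContDiff ℝ 2 F) (hf₁smooth : ContDiff ℝ 2 f₁)
    (hlip : ∀ x y : EuclideanSpace ℝ (Fin d),
      ‖fderiv ℝ (gradient F) x - fderiv ℝ (gradient F) y‖ ≤ L * ‖x - y‖)
    (hsim : ∀ x : EuclideanSpace ℝ (Fin d),
      ‖fderiv ℝ (gradient f₁) x - fderiv ℝ (gradient F) x‖ ≤ β)
    (xstar : EuclideanSpace ℝ (Fin d)) (hmin : ∀ u, F xstar ≤ F u)
    (x y w : ℕ → EuclideanSpace ℝ (Fin d))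
    (ψ : ℕ → EuclideanSpace ℝ (Fin d) → ℝ) (A : ℕ → ℝ)
    -- x₁ is a global minimizer of F̃_{4L}(·, x₀)
    (hx1 : ∀ u, cubicModel F f₁ β (4 * L) (x 1) (x 0) ≤ cubicModel F f₁ β (4 * L) u (x 0))
    -- ψ₁(x) = F(x₁) + 8β‖x − x₀‖² + 16L‖x − x₀‖³ and y₁ is a global minimizer of ψ₁
    (hψ1 : ψ 1 = fun u => F (x 1) + 8 * β * ‖u - x 0‖ ^ 2 + 16 * L * ‖u - x 0‖ ^ 3)
    (hy1 : ∀ u, ψ 1 (y 1) ≤ ψ 1 u)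
    -- A₀ = 1 and A_t = A_{t−1}(1 − 3/(t+3)) for t ≥ 1
    (hA0 : A 0 = 1)
    (hA : ∀ t : ℕ, 1 ≤ t → A t = A (t - 1) * (1 - 3 / ((t : ℝ) + 3)))
    -- w_t = (1 − 3/(t+3))x_t + (3/(t+3))y_t for t ≥ 1
    (hw : ∀ t : ℕ, 1 ≤ t →
      w t = (1 - 3 / ((t : ℝ) + 3)) • x t + (3 / ((t : ℝ) + 3)) • y t)
    -- x_{t+1} is a global minimizer of F̃_{4L}(·, w_t) for t ≥ 1
    (hx : ∀ t : ℕ, 1 ≤ t → ∀ u,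
      cubicModel F f₁ β (4 * L) (x (t + 1)) (w t) ≤ cubicModel F f₁ β (4 * L) u (w t))
    -- ψ_{t+1}(x) = ψ_t(x) + 4β‖x − x₀‖² + (3/(A_t(t+3)))(F(x_{t+1}) + ⟨∇F(x_{t+1}), x − x_{t+1}⟩)
    (hψ : ∀ t : ℕ, 1 ≤ t → ψ (t + 1) = fun u => ψ t u + 4 * β * ‖u - x 0‖ ^ 2
      + (3 / (A t * ((t : ℝ) + 3)))
          * (F (x (t + 1)) + ⟪gradient F (x (t + 1)), u - x (t + 1)⟫))
    -- y_{t+1} is a global minimizer of ψ_{t+1} for t ≥ 1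
    (hy : ∀ t : ℕ, 1 ≤ t → ∀ u, ψ t (y t) ≤ ψ t u) :
    ∀ t : ℕ, 1 ≤ t →
      F (x t) - F xstar ≤ 98 * L * ‖x 0 - xstar‖ ^ 3 / (t : ℝ) ^ 3
        + 48 * β * ‖x 0 - xstar‖ ^ 2 / (t : ℝ) ^ 2 := by
  have hAc : ∀ t : ℕ, A t = 6 / (((t:ℝ)+1)*((t:ℝ)+2)*((t:ℝ)+3)) := by
    intro t
    induction t with
    | zero => rw [hA0]; norm_num
    | succ n ih =>
      rw [hA (n+1) (by omega), Nat.add_sub_cancel, ih]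
      have : (0:ℝ) ≤ n := Nat.cast_nonneg n
      push_cast
      field_simp
      ring
  have hcoef : ∀ t : ℕ, 3 / (A t * ((t : ℝ) + 3)) = ((t:ℝ)+1)*((t:ℝ)+2)/2 := by
    intro t
    rw [hAc]
    have : (0:ℝ) ≤ t := Nat.cast_nonneg t
    field_simp
    norm_num
  have hψ' : ∀ t : ℕ, 1 ≤ t → ∀ u, ψ (t+1) u = ψ t u + 4 * β * ‖u - x 0‖ ^ 2
      + (((t:ℝ)+1)*((t:ℝ)+2)/2)
          * (F (x (t + 1)) + ⟪gradient F (x (t + 1)), u - x (t + 1)⟫) := by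
    intro t ht u
    rw [hψ t ht, ← hcoef]
  -- upper estimate at the minimizer
  have hup : ∀ t : ℕ, 1 ≤ t → ψ t xstar ≤ F (x 1) + ((t:ℝ)*((t:ℝ)+1)*((t:ℝ)+2)/6 - 1) * F xstar
      + 4*β*((t:ℝ)+1)*‖x 0 - xstar‖^2 + 16*L*‖x 0 - xstar‖^3 := by
    intro t ht
    induction t, ht using Nat.le_induction with
    | base => rw [hψ1]; simp only [norm_sub_rev xstar]; push_cast; linarith
    | succ n hn ih =>
      rw [hψ' n hn, norm_sub_rev xstar]
      have h1 := aux_convex F hFsmooth hFconv (x (n+1)) xstar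
      have h2 := mul_le_mul_of_nonneg_left h1 (show (0:ℝ) ≤ ((n:ℝ)+1)*((n:ℝ)+2)/2 by positivity)
      push_cast
      linarith
  -- uniform midpoint convexity
  have hmid : ∀ t : ℕ, 1 ≤ t → ∀ u v, ψ t ((1/2:ℝ)•(u+v)) + β*((t:ℝ)+1)*‖u-v‖^2 + 2*L*‖u-v‖^3
      ≤ (ψ t u + ψ t v)/2 := by
    intro t ht u v
    have hm := aux_mid (x 0) u v
    have hm2 := mul_le_mul_of_nonneg_left hm.2 hβ.le
    have hm1 := mul_le_mul_of_nonneg_left hm.1 hL.le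
    induction t, ht using Nat.le_induction with
    | base => rw [hψ1]; simp only; push_cast; linarith
    | succ n hn ih =>
      rw [hψ' n hn, hψ' n hn, hψ' n hn]
      have e : ⟪gradient F (x (n + 1)), (1/2:ℝ)•(u+v) - x (n + 1)⟫ =
        (⟪gradient F (x (n + 1)), u - x (n + 1)⟫ + ⟪gradient F (x (n + 1)), v - x (n + 1)⟫)/2 := by
        simp only [inner_sub_right, inner_smul_right, inner_add_right]; ring
      rw [e]
      push_cast
      linarith
  have huc : ∀ t : ℕ, 1 ≤ t → ∀ u, ψ t (y t) + 2*β*((t:ℝ)+1)*‖u-y t‖^2 + 4*L*‖u-y t‖^3 ≤ ψ t u := by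
    intro t ht u
    have h1 := hmid t ht u (y t)
    have h2 := hy t ht ((1/2:ℝ)•(u+y t))
    linarith
  -- lower estimate
  have hlow : ∀ t : ℕ, 1 ≤ t → (t:ℝ)*((t:ℝ)+1)*((t:ℝ)+2)/6 * F (x t) ≤ ψ t (y t) := by
    intro t ht
    induction t, ht using Nat.le_induction with
    | base =>
      rw [hψ1]; simp only
      have : 0 ≤ 8 * β * ‖y 1 - x 0‖ ^ 2 + 16 * L * ‖y 1 - x 0‖ ^ 3 := by positivity
      push_cast; linarith
    | succ n hn ih =>
      rw [hψ' n hn]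
      have h1 := huc n hn (y (n+1))
      have h2 := aux_convex F hFsmooth hFconv (x (n+1)) (x n)
      have h3 := aux_model F f₁ L β hFsmooth hf₁smooth hlip hsim _ _ (hx n hn)
      have hn0 : (0:ℝ) ≤ n := Nat.cast_nonneg n
      obtain ⟨ρ, hρ⟩ : ∃ ρ, ρ = 3/((n:ℝ)+3)*‖y (n+1) - y n‖ := ⟨_, rfl⟩
      have hρ0 : 0 ≤ ρ := by rw [hρ]; positivity
      have hr : ‖y (n+1) - y n‖ = ((n:ℝ)+3)/3*ρ := by rw [hρ]; field_simp
      have h4 := aux_step _ _ β L ρ hβ hL hρ0 h3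
      have hcs := (abs_le.1 (abs_real_inner_le_norm (gradient F (x (n+1))) (y (n+1) - y n))).1
      rw [hr] at h1 hcs
      have e : ((n:ℝ)+3) * ⟪gradient F (x (n+1)), w n - x (n+1)⟫ =
          (n:ℝ) * ⟪gradient F (x (n+1)), x n - x (n+1)⟫
          + 3 * (⟪gradient F (x (n+1)), y (n+1) - x (n+1)⟫ - ⟪gradient F (x (n+1)), y (n+1) - y n⟫) := by
        rw [hw n hn]
        simp only [inner_sub_right, inner_smul_right, inner_add_right]
        field_simp
        ring
      have hq : 0 ≤ 4 * β * ‖y (n+1) - x 0‖^2 := by positivity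
      have h2' := mul_le_mul_of_nonneg_left h2 (show (0:ℝ) ≤ (n:ℝ)*((n:ℝ)+1)*((n:ℝ)+2)/6 by positivity)
      have h4' := mul_nonneg (show (0:ℝ) ≤ ((n:ℝ)+1)*((n:ℝ)+2)*((n:ℝ)+3)/6 by positivity) h4
      have hcs' := mul_le_mul_of_nonneg_left hcs (show (0:ℝ) ≤ ((n:ℝ)+1)*((n:ℝ)+2)/2 by positivity)
      have e' := congrArg (fun z => ((n:ℝ)+1)*((n:ℝ)+2)/6*z) e
      have p1 : ((n:ℝ)+1)*((n:ℝ)+2)*((n:ℝ)+3)/6*(4/3*β*ρ^2) ≤ 2*β*((n:ℝ)+1)*(((n:ℝ)+3)/3*ρ)^2 := by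
        have : 0 ≤ β*ρ^2*((n:ℝ)+1)*((n:ℝ)+3) := by positivity
        linarith
      have p2 : ((n:ℝ)+1)*((n:ℝ)+2)*((n:ℝ)+3)/6*(8/9*L*ρ^3) ≤ 4*L*(((n:ℝ)+3)/3*ρ)^3 := by
        have h5 : 0 ≤ L*ρ^3*((n:ℝ)+3) := by positivity
        have h6 : 0 ≤ L*ρ^3*((n:ℝ)+3)*(((n:ℝ)+3)^2-((n:ℝ)+1)*((n:ℝ)+2)) := mul_nonneg h5 (by nlinarith only [hn0])
        linarith
      push_cast
      linarith
  intro t ht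
  have h0 := aux_first F L β hL hβ hFconv hFsmooth hlip (x 1) (x 0) xstar hmin
    (aux_model F f₁ L β hFsmooth hf₁smooth hlip hsim _ _ hx1)
  have h1 := hlow t ht
  have h2 := hy t ht xstar
  have h3 := hup t ht
  have ht1 : (1:ℝ) ≤ t := by exact_mod_cast ht
  have hR : 0 ≤ ‖x 0 - xstar‖ := norm_nonneg _
  generalize (t:ℝ) = τ at h1 h2 h3 ht1 ⊢
  generalize ‖x 0 - xstar‖ = R at h0 h3 hR ⊢
  have hm : τ*(τ+1)*(τ+2)/6 * (F (x t) - F xstar) ≤ (4*τ+6)*(β*R^2) + 49/3*(L*R^3) := by linarith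
  have hp : 0 < τ*(τ+1)*(τ+2)/6 := by positivity
  refine le_of_mul_le_mul_left (hm.trans ?_) hp
  have hb : 0 ≤ β*R^2 := by positivity
  have hl : 0 ≤ L*R^3 := by positivity
  have k1 : 49/3 ≤ τ*(τ+1)*(τ+2)/6 * (98/τ^3) := by
    have : τ*(τ+1)*(τ+2)/6 * (98/τ^3) = (τ+1)*(τ+2)*(49/3)/τ^2 := by field_simp; norm_num
    rw [this, le_div_iff₀ (by positivity)]
    nlinarith
  have k2 : 4*τ+6 ≤ τ*(τ+1)*(τ+2)/6 * (48/τ^2) := by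
    have : τ*(τ+1)*(τ+2)/6 * (48/τ^2) = (τ+1)*(τ+2)*8/τ := by field_simp; norm_num
    rw [this, le_div_iff₀ (by positivity)]
    nlinarith
  have k1' := mul_le_mul_of_nonneg_right k1 hl
  have k2' := mul_le_mul_of_nonneg_right k2 hb
  have e : τ*(τ+1)*(τ+2)/6 * (98 * L * R ^ 3 / τ ^ 3 + 48 * β * R ^ 2 / τ ^ 2)
    = τ*(τ+1)*(τ+2)/6 * (98/τ^3) * (L*R^3) + τ*(τ+1)*(τ+2)/6 * (48/τ^2) * (β*R^2) := by ring
  rw [e]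
  linarith
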